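/- Let R be a relative hemisystem of Q⁻(2n+1,2) with respect to 𝒬, where n ≥ 3, and let 𝒢 be the graph whose vertex set is R, two distinct points ⟨x⟩, ⟨y⟩ ∈ R being adjacent if and only if the 2-dimensional subspace spanned by x and y is totally singular. Then 𝒢 is a strongly regular graph with parameters v = 2^{n−1}(2ⁿ − 1), k = (2^{n−2} − 1)(2ⁿ + 1), λ = 2(2^{n−1} + 1)(2^{n−3} − 1), and μ = 2^{n−1}(2^{n−2} − 1). -/

import Mathlib

noncomputable section

open Module

variable {F V : Type*} [Field F] [AddCommGroup V] [Module F V]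

/-- `P` is a singular point of the quadratic form `Q`, i.e. a `1`-dimensional subspace
spanned by a nonzero singular vector. -/
def IsSingularPoint (Q : QuadraticForm F V) (P : Submodule F V) : Prop :=
  ∃ v : V, v ≠ 0 ∧ Q v = 0 ∧ P = Submodule.span F {v}

/-- A subspace is totally singular if `Q` vanishes identically on it. -/
def TotallySingular (Q : QuadraticForm F V) (W : Submodule F V) : Prop :=
  ∀ v ∈ W, Q v = 0

/-- A generator is a totally singular subspace of (vector space) dimension `n`. -/
def IsGenerator (Q : QuadraticForm F V) (n : ℕ) (g : Submodule F V) : Prop :=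
  TotallySingular Q g ∧ finrank F g = n

/-- The restriction of `Q` to the subspace `U` is nondegenerate. -/
def NondegOn (Q : QuadraticForm F V) (U : Submodule F V) : Prop :=
  ∀ v ∈ U, Q v = 0 → (∀ w ∈ U, QuadraticMap.polar (⇑Q) v w = 0) → v = 0

/-- The quadratic form `Q` is nondegenerate. -/
def Nondeg (Q : QuadraticForm F V) : Prop :=
  ∀ v : V, Q v = 0 → (∀ w : V, QuadraticMap.polar (⇑Q) v w = 0) → v = 0

/-- `Q` has Witt index `n`: every totally singular subspace has dimension at most `n`
and some totally singular subspace has dimension `n`. -/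
def HasWittIndex (Q : QuadraticForm F V) (n : ℕ) : Prop :=
  (∀ W : Submodule F V, TotallySingular Q W → finrank F W ≤ n) ∧
  ∃ W : Submodule F V, TotallySingular Q W ∧ finrank F W = n

/-- A relative `m`-ovoid with respect to the parabolic section cut out by the
hyperplane `H`: a set `R` of singular points not contained in `H` such that every
generator not contained in `H` contains exactly `m` points of `R`. -/
def IsRelativeMOvoid (Q : QuadraticForm F V) (n : ℕ) (H : Submodule F V) (m : ℕ)
    (R : Set (Submodule F V)) : Prop :=
  (∀ P ∈ R, IsSingularPoint Q P ∧ ¬ P ≤ H) ∧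
  ∀ g : Submodule F V, IsGenerator Q n g → ¬ g ≤ H → {P ∈ R | P ≤ g}.ncard = m

/-- Two distinct singular points of `R` are adjacent when the `2`-dimensional subspace
they span (their sup) is totally singular, i.e. when they span a line of the quadric. -/
def AdjOn (Q : QuadraticForm F V) (P P' : Submodule F V) : Prop :=
  P ≠ P' ∧ TotallySingular Q (P ⊔ P')

/-!
Over the field with two elements every point is a single nonzero vector, and `H = z⊥` with
`Q z = 1`. Let `T` be the set of vectors of `R`, let `A` be the set of all singular vectors off
`z⊥`, and let `f` be `1` on `T`, `-1` on `A \ T` and `0` elsewhere. The hemisystem condition says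
that `f` sums to zero over every generator. By induction on the codimension in a generator,
averaging over the extensions of a totally singular `W` by one singular vector, this gives
`∑_{W⊥} f = -q^(m+1) ∑_W f` with `m = n - dim W` and `q = 2`.

Taking `W = 0` and `W = ⟨x⟩` determines `∑ f` and `∑ f(w) χ(B(x, w))`, where `χ` is the sign
character. Comparing `x` with `x + z` shows that `f` is antisymmetric, `f(x + z) = -f(x)`. Hence for
distinct `x, y ∈ T` we have `x + y ≠ z`, and `∑ f(w) χ(B(x + y, w)) = 0` because `B(x + y, z) = 0`.
The corresponding sums over `A` come from the Gauss sum of `Q`, and `2 · 1_T = 1_A + f` then yields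
`∑_T χ(B(x, w))` and `∑_T χ(B(x, w)) χ(B(y, w))`, that is, the valency and the numbers of common
neighbours.
-/

section TotallySingular

open QuadraticMap Submodule

variable {Q : QuadraticForm F V} {W : Submodule F V}

/-- The orthogonal complement `W⊥` of `W` with respect to the polar form of `Q`. -/
def perp (Q : QuadraticForm F V) (W : Submodule F V) : Submodule F V :=
  LinearMap.BilinForm.orthogonal Q.polarBilin W

lemma mem_perp {v : V} : v ∈ perp Q W ↔ ∀ u ∈ W, polar Q u v = 0 :=
  Iff.rfl

lemma perp_anti {W' : Submodule F V} (h : W ≤ W') : perp Q W' ≤ perp Q W :=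
  LinearMap.BilinForm.orthogonal_le h

lemma mem_perp_span_singleton {x v : V} : v ∈ perp Q (F ∙ x) ↔ polar Q x v = 0 := by
  refine ⟨fun h => h x (mem_span_singleton_self x), fun h u hu => ?_⟩
  obtain ⟨a, rfl⟩ := mem_span_singleton.1 hu
  simp [h]

lemma mem_perp_sup_span_singleton {x v : V} :
    v ∈ perp Q (W ⊔ F ∙ x) ↔ v ∈ perp Q W ∧ polar Q x v = 0 := by
  rw [← mem_perp_span_singleton]
  refine ⟨fun h => ⟨perp_anti le_sup_left h, perp_anti le_sup_right h⟩, fun ⟨hW, hx⟩ u hu => ?_⟩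
  obtain ⟨w, hw, y, hy, rfl⟩ := mem_sup.1 hu
  change polar Q (w + y) v = 0
  rw [polar_add_left, mem_perp.1 hW w hw, mem_perp.1 hx y hy, add_zero]

lemma TotallySingular.le_perp (hW : TotallySingular Q W) : W ≤ perp Q W := by
  intro v hv u hu
  change polar Q u v = 0
  simp [polar, hW u hu, hW v hv, hW _ (W.add_mem hu hv)]

lemma totallySingular_bot : TotallySingular Q ⊥ := by
  simp [TotallySingular]

lemma TotallySingular.sup_span_singleton (hW : TotallySingular Q W) {v : V} (hv : Q v = 0)
    (hvW : v ∈ perp Q W) : TotallySingular Q (W ⊔ F ∙ v) := by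
  intro y hy
  obtain ⟨w, hw, av, hav, rfl⟩ := mem_sup.1 hy
  obtain ⟨a, rfl⟩ := mem_span_singleton.1 hav
  simp [QuadraticMap.map_add Q, QuadraticMap.map_smul, hW w hw, hv, mem_perp.1 hvW w hw]

lemma totallySingular_span_singleton {v : V} (hv : Q v = 0) : TotallySingular Q (F ∙ v) := by
  have h := totallySingular_bot.sup_span_singleton hv (mem_perp.2 (by simp))
  rwa [bot_sup_eq] at h

lemma mem_sup_span_singleton_comm {v y : V} (hv : v ∉ W) (hy : y ∉ W) :
    y ∈ W ⊔ F ∙ v ↔ v ∈ W ⊔ F ∙ y := by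
  have exchange {v y : V} (hy : y ∉ W) (h : y ∈ W ⊔ F ∙ v) : v ∈ W ⊔ F ∙ y := by
    have hspan (x : V) : span F (insert x (W : Set V)) = W ⊔ F ∙ x := by
      rw [span_insert, span_eq, sup_comm]
    rw [← hspan] at h ⊢
    exact mem_span_insert_exchange h (by rwa [span_eq])
  exact ⟨exchange hy, exchange hv⟩

lemma HasWittIndex.mem_of_mem_perp [FiniteDimensional F V] {n : ℕ} (hQ : HasWittIndex Q n)
    (hW : IsGenerator Q n W) {v : V} (hv : Q v = 0) (hvW : v ∈ perp Q W) : v ∈ W := by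
  by_contra hvn
  have hle := hQ.1 _ (hW.1.sup_span_singleton hv hvW)
  rw [finrank_sup_span_singleton hvn, hW.2] at hle
  omega

lemma finrank_add_finrank_perp [FiniteDimensional F V]
    (hW : ∀ u ∈ W, (∀ w, polar Q u w = 0) → u = 0) :
    finrank F W + finrank F (perp Q W) = finrank F V := by
  have hker : W ⊓ LinearMap.ker Q.polarBilin = ⊥ :=
    (Submodule.eq_bot_iff _).2 fun u hu => hW u hu.1 fun w => LinearMap.congr_fun hu.2 w
  have h := LinearMap.BilinForm.finrank_add_finrank_orthogonal' (B := Q.polarBilin) W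
  rwa [hker, finrank_bot, add_zero] at h

-- `Q z = 0` would put `z` in the radical of the restriction of `Q` to `z⊥ = H`.
lemma exists_forall_mem_iff_polar_eq_zero [FiniteDimensional F V]
    (hQ : ∀ v, (∀ w, polar Q v w = 0) → v = 0) {H : Submodule F V}
    (hH : finrank F H + 1 = finrank F V) (hHnd : NondegOn Q H) :
    ∃ z, Q z ≠ 0 ∧ ∀ v, v ∈ H ↔ polar Q z v = 0 := by
  have hrank := finrank_add_finrank_perp (Q := Q) (W := H) fun u _ => hQ u
  obtain ⟨z, hzH, hz0⟩ := (Submodule.ne_bot_iff (perp Q H)).1 fun h => by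
    rw [h, finrank_bot] at hrank
    omega
  have hz := finrank_add_finrank_perp (Q := Q) (W := F ∙ z) fun u _ => hQ u
  rw [finrank_span_singleton hz0] at hz
  have hHz : H = perp Q (F ∙ z) := by
    refine eq_of_le_of_finrank_le (fun v hv => ?_) (by omega)
    rw [mem_perp_span_singleton, polar_comm]
    exact hzH v hv
  have hmem (v : V) : v ∈ H ↔ polar Q z v = 0 := by rw [hHz, mem_perp_span_singleton]
  refine ⟨z, fun hQz => hz0 ?_, hmem⟩
  exact hHnd z ((hmem z).2 (by simp [polar_self, hQz])) hQz fun w hw => (hmem w).1 hw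

/-- `Q` is of elliptic type `Q⁻(2n+1, q)`: nondegenerate of Witt index `n` in dimension `2n+2`. -/
structure IsElliptic (Q : QuadraticForm F V) (n : ℕ) : Prop where
  finrank_eq : finrank F V = 2 * n + 2
  nondeg : Nondeg Q
  hasWittIndex : HasWittIndex Q n

lemma IsElliptic.finrank_perp [FiniteDimensional F V] {n m : ℕ} (hQ : IsElliptic Q n)
    (hW : TotallySingular Q W) (hm : finrank F W + m = n) :
    finrank F (perp Q W) = finrank F W + (2 * m + 2) := by
  have hrank := finrank_add_finrank_perp fun u hu => hQ.nondeg u (hW u hu)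
  rw [hQ.finrank_eq] at hrank
  omega

open scoped Classical in
/-- The singular vectors of `W⊥` outside `W`, which represent the singular points of the residual
space `W⊥ / W` when `W` is totally singular. -/
def residualSingular [Fintype V] (Q : QuadraticForm F V) (W : Submodule F V) : Finset V :=
  {v | v ∈ perp Q W ∧ Q v = 0 ∧ v ∉ W}

lemma mem_residualSingular [Fintype V] {v : V} :
    v ∈ residualSingular Q W ↔ v ∈ perp Q W ∧ Q v = 0 ∧ v ∉ W := by
  simp [residualSingular]

open scoped Classical in
lemma residualSingular_filter_mem_perp [Fintype V] (Q : QuadraticForm F V) (W : Submodule F V) :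
    {v ∈ residualSingular Q W | v ∈ perp Q W} = residualSingular Q W :=
  Finset.filter_true_of_mem fun _ hv => (mem_residualSingular.1 hv).1

open scoped Classical in
lemma sum_eq_sum_add_sum_residualSingular [Fintype V] {f : V → ℤ}
    (hf : ∀ v, Q v ≠ 0 → f v = 0) {X : Submodule F V} (hWX : W ≤ X) (hX : X ≤ perp Q W) :
    ∑ v with v ∈ X, f v = ∑ v with v ∈ W, f v + ∑ v ∈ residualSingular Q W with v ∈ X, f v := by
  rw [Finset.sum_filter, Finset.sum_filter, residualSingular, Finset.filter_filter,
    Finset.sum_filter, ← Finset.sum_add_distrib]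
  refine Finset.sum_congr rfl fun v _ => ?_
  by_cases hvW : v ∈ W
  · simp [hvW, hWX hvW]
  · by_cases hvX : v ∈ X
    · by_cases hv : Q v = 0 <;> simp [hvW, hvX, hX hvX, hv, hf]
    · simp [hvW, hvX]

end TotallySingular

section CharSum

variable [Fintype F]

open scoped Classical in
/-- The sum of `ψ a` over the nontrivial additive characters `ψ` of the finite field `F`, written
in closed form. It is the sign character of `F` when `F` has two elements. -/
def charSum (a : F) : ℤ :=
  if a = 0 then Fintype.card F - 1 else -1

open scoped Classical in
lemma charSum_eq (a : F) : charSum a = Fintype.card F * (if a = 0 then 1 else 0) - 1 := by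
  by_cases h : a = 0 <;> simp [charSum, h]

lemma charSum_of_ne_zero {a : F} (ha : a ≠ 0) : charSum a = -1 := by
  simp [charSum, ha]

open scoped Classical in
lemma sum_charSum : ∑ a : F, charSum a = 0 := by
  simp [charSum_eq, ← Finset.mul_sum, -mul_ite]

lemma sum_charSum_add_apply [Fintype V] {ℓ : V →ₗ[F] F} (hℓ : ℓ ≠ 0) (a : F) :
    ∑ v, charSum (a + ℓ v) = 0 := by
  have hshift (t : F) : ∑ v, charSum (a + ℓ v) = ∑ v, charSum (a + ℓ v + t) := by
    obtain ⟨u, rfl⟩ := LinearMap.surjective hℓ t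
    rw [← Equiv.sum_comp (Equiv.addRight u)]
    simp [add_assoc]
  have hmul : (Fintype.card F : ℤ) * ∑ v, charSum (a + ℓ v) = 0 := calc
    _ = ∑ t : F, ∑ v, charSum (a + ℓ v + t) := by simp [← hshift]
    _ = ∑ v, ∑ t : F, charSum (a + ℓ v + t) := Finset.sum_comm
    _ = 0 := Finset.sum_eq_zero fun v _ =>
      (Equiv.sum_comp (Equiv.addLeft (a + ℓ v)) charSum).trans sum_charSum
  simpa using hmul

end CharSum

section SingularCount

open QuadraticMap Submodule

variable [Fintype F] [Fintype V] {Q : QuadraticForm F V} {W : Submodule F V}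

open scoped Classical in
lemma card_filter_mem (W : Submodule F V) :
    Finset.card {v | v ∈ W} = Fintype.card F ^ finrank F W := by
  rw [← Module.card_eq_pow_finrank (K := F) (V := W), Fintype.card_subtype]

open scoped Classical in
lemma sum_charSum_quadratic (Q : QuadraticForm F V) (W : Submodule F V) :
    ∑ v with v ∈ W, charSum (Q v) = Fintype.card F * Finset.card {v | v ∈ W ∧ Q v = 0}
      - Fintype.card F ^ finrank F W := by
  simp [charSum_eq, ← Finset.mul_sum, -mul_ite, Finset.filter_filter, card_filter_mem]

open scoped Classical in
-- On each coset of `W` outside `W⊥`, `Q` is a nonconstant affine function, hence balanced.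
lemma TotallySingular.sum_charSum_perp (hW : TotallySingular Q W) :
    ∑ v with v ∈ perp Q W, charSum (Q v) = ∑ v, charSum (Q v) := by
  let h (v : V) : ℤ := if v ∈ perp Q W then 0 else charSum (Q v)
  have hcoset (v : V) : ∑ u : W, h (v + u) = 0 := by
    have hmem (u : W) : v + u ∈ perp Q W ↔ v ∈ perp Q W :=
      (perp Q W).add_mem_iff_left (hW.le_perp u.2)
    by_cases hv : v ∈ perp Q W
    · simp [h, hmem, hv]
    · have hℓ : (Q.polarBilin v).domRestrict W ≠ 0 := fun h0 => hv fun u hu => by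
        change polar Q u v = 0
        rw [polar_comm]
        exact LinearMap.congr_fun h0 ⟨u, hu⟩
      rw [← sum_charSum_add_apply hℓ (Q v)]
      refine Finset.sum_congr rfl fun u _ => ?_
      simp [h, hmem, hv, QuadraticMap.map_add Q, hW u u.2]
  have hmul : (Fintype.card W : ℤ) * ∑ v, h v = 0 := calc
    _ = ∑ u : W, ∑ v, h (v + u) := by
      have hshift (u : W) : ∑ v, h (v + u) = ∑ v, h v := Equiv.sum_comp (Equiv.addRight (u : V)) h
      simp [hshift]
    _ = ∑ v, ∑ u : W, h (v + u) := Finset.sum_comm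
    _ = 0 := Finset.sum_eq_zero fun v _ => hcoset v
  have hoff : ∑ v with v ∉ perp Q W, charSum (Q v) = 0 := by
    simpa [h, Finset.sum_filter] using hmul
  rw [← Finset.sum_filter_add_sum_filter_not Finset.univ (· ∈ perp Q W), hoff, add_zero]

namespace IsElliptic

variable {n m : ℕ} (hQ : IsElliptic Q n)
include hQ

lemma sum_charSum :
    ∑ v, charSum (Q v) = -((Fintype.card F - 1) * Fintype.card F ^ (n + 1)) := by
  classical
  obtain ⟨W, hW, hWn⟩ := hQ.hasWittIndex.2
  have hmem (v : V) : v ∈ perp Q W ∧ Q v = 0 ↔ v ∈ W :=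
    ⟨fun h => hQ.hasWittIndex.mem_of_mem_perp ⟨hW, hWn⟩ h.2 h.1, fun h => ⟨hW.le_perp h, hW v h⟩⟩
  rw [← hW.sum_charSum_perp, sum_charSum_quadratic, hQ.finrank_perp hW (m := 0) (by omega)]
  simp only [hmem, card_filter_mem, hWn]
  push_cast
  ring

open scoped Classical in
lemma card_singular_perp (hW : TotallySingular Q W) (hm : finrank F W + m = n) :
    (Finset.card {v | v ∈ perp Q W ∧ Q v = 0} : ℤ) = Fintype.card F ^ finrank F W *
      (Fintype.card F ^ (2 * m + 1) - (Fintype.card F - 1) * Fintype.card F ^ m) := by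
  have hsum := hW.sum_charSum_perp
  rw [sum_charSum_quadratic, hQ.finrank_perp hW hm, hQ.sum_charSum, ← hm] at hsum
  have hq : (Fintype.card F : ℤ) ≠ 0 := by simp
  refine mul_left_cancel₀ hq ?_
  linear_combination hsum

end IsElliptic

open scoped Classical in
lemma card_residualSingular_filter_mem (hW : TotallySingular Q W) {X : Submodule F V}
    (hWX : W ≤ X) (hX : X ≤ perp Q W) :
    (Finset.card {v ∈ residualSingular Q W | v ∈ X} : ℤ) =
      Finset.card {v | v ∈ X ∧ Q v = 0} - Fintype.card F ^ finrank F W := by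
  have hWQ : ({v | v ∈ W ∧ Q v = 0} : Finset V) = ({v | v ∈ W} : Finset V) :=
    Finset.filter_congr fun v _ => and_iff_left_of_imp (hW v)
  have hRQ : ({v ∈ residualSingular Q W | v ∈ X ∧ Q v = 0} : Finset V) =
      {v ∈ residualSingular Q W | v ∈ X} :=
    Finset.filter_congr fun v hv => and_iff_left (mem_residualSingular.1 hv).2.1
  have hsum := sum_eq_sum_add_sum_residualSingular
    (f := fun v => if Q v = 0 then 1 else 0) (fun v hv => if_neg hv) hWX hX
  simp only [Finset.sum_boole, Finset.filter_filter, hWQ, hRQ, card_filter_mem] at hsum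
  push_cast at hsum
  linarith

open scoped Classical in
lemma sum_residualSingular_sum (hW : TotallySingular Q W) {f : V → ℤ}
    (hf : ∀ v, Q v ≠ 0 → f v = 0) {X : V → Submodule F V} {c : ℤ}
    (hWX : ∀ v ∈ residualSingular Q W, W ≤ X v)
    (hX : ∀ v ∈ residualSingular Q W, X v ≤ perp Q W)
    (hcomm : ∀ v ∈ residualSingular Q W, ∀ y ∈ residualSingular Q W, y ∈ X v ↔ v ∈ X y)
    (hc : ∀ v ∈ residualSingular Q W, (Finset.card {y | y ∈ X v ∧ Q y = 0} : ℤ) = c) :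
    ∑ v ∈ residualSingular Q W, ∑ y with y ∈ X v, f y =
      (residualSingular Q W).card * ∑ y with y ∈ W, f y +
        (c - Fintype.card F ^ finrank F W) * ∑ y ∈ residualSingular Q W, f y := by
  set S := residualSingular Q W
  calc ∑ v ∈ S, ∑ y with y ∈ X v, f y
      = ∑ v ∈ S, (∑ y with y ∈ W, f y + ∑ y ∈ S with y ∈ X v, f y) :=
        Finset.sum_congr rfl fun v hv =>
          sum_eq_sum_add_sum_residualSingular hf (hWX v hv) (hX v hv)
    _ = S.card * ∑ y with y ∈ W, f y + ∑ y ∈ S, ∑ v ∈ S with v ∈ X y, f y := by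
        rw [Finset.sum_add_distrib, Finset.sum_const, nsmul_eq_mul]
        congr 1
        refine Finset.sum_comm' fun v y => ?_
        simp only [Finset.mem_filter]
        have := hcomm v
        grind
    _ = S.card * ∑ y with y ∈ W, f y +
          (c - Fintype.card F ^ finrank F W) * ∑ y ∈ S, f y := by
        congr 1
        rw [Finset.mul_sum]
        refine Finset.sum_congr rfl fun y hy => ?_
        rw [Finset.sum_const, nsmul_eq_mul,
          card_residualSingular_filter_mem hW (hWX y hy) (hX y hy), hc y hy]

open scoped Classical in
lemma sum_residualSingular_sum_sup_span_singleton (hW : TotallySingular Q W) {f : V → ℤ}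
    (hf : ∀ v, Q v ≠ 0 → f v = 0) :
    ∑ v ∈ residualSingular Q W, ∑ y with y ∈ W ⊔ F ∙ v, f y =
      (residualSingular Q W).card * ∑ y with y ∈ W, f y +
        (Fintype.card F ^ (finrank F W + 1) - Fintype.card F ^ finrank F W) *
          ∑ y ∈ residualSingular Q W, f y := by
  have hsup {v : V} (hv : v ∈ residualSingular Q W) : TotallySingular Q (W ⊔ F ∙ v) :=
    hW.sup_span_singleton (mem_residualSingular.1 hv).2.1 (mem_residualSingular.1 hv).1
  refine sum_residualSingular_sum hW hf (fun v _ => le_sup_left)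
    (fun v hv => (hsup hv).le_perp.trans (perp_anti le_sup_left))
    (fun v hv y hy => mem_sup_span_singleton_comm (mem_residualSingular.1 hv).2.2
      (mem_residualSingular.1 hy).2.2) fun v hv => ?_
  have hfilter : ({y | y ∈ W ⊔ F ∙ v ∧ Q y = 0} : Finset V) = ({y | y ∈ W ⊔ F ∙ v} : Finset V) :=
    Finset.filter_congr fun y _ => and_iff_left_of_imp (hsup hv y)
  rw [hfilter, card_filter_mem, finrank_sup_span_singleton (mem_residualSingular.1 hv).2.2]
  push_cast
  rfl

namespace IsElliptic

variable {n m : ℕ} (hQ : IsElliptic Q n)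
include hQ

open scoped Classical in
lemma card_residualSingular (hW : TotallySingular Q W) (hm : finrank F W + m = n) :
    ((residualSingular Q W).card : ℤ) = Fintype.card F ^ finrank F W *
      ((Fintype.card F ^ m - 1) * (Fintype.card F ^ (m + 1) + 1)) := by
  have hcard := card_residualSingular_filter_mem hW hW.le_perp le_rfl
  rw [residualSingular_filter_mem_perp, hQ.card_singular_perp hW hm] at hcard
  linear_combination hcard

open scoped Classical in
lemma sum_residualSingular_sum_perp (hW : TotallySingular Q W) (hm : finrank F W + (m + 1) = n)
    {f : V → ℤ} (hf : ∀ v, Q v ≠ 0 → f v = 0) :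
    ∑ v ∈ residualSingular Q W, ∑ y with y ∈ perp Q (W ⊔ F ∙ v), f y =
      (residualSingular Q W).card * ∑ y with y ∈ W, f y +
        (Fintype.card F ^ (finrank F W + 1) *
            (Fintype.card F ^ (2 * m + 1) - (Fintype.card F - 1) * Fintype.card F ^ m) -
          Fintype.card F ^ finrank F W) * ∑ y ∈ residualSingular Q W, f y := by
  have hsup {v : V} (hv : v ∈ residualSingular Q W) : TotallySingular Q (W ⊔ F ∙ v) :=
    hW.sup_span_singleton (mem_residualSingular.1 hv).2.1 (mem_residualSingular.1 hv).1
  refine sum_residualSingular_sum hW hf (fun v hv => le_sup_left.trans (hsup hv).le_perp)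
    (fun v _ => perp_anti le_sup_left) (fun v hv y hy => ?_) fun v hv => ?_
  · simp only [mem_perp_sup_span_singleton, (mem_residualSingular.1 hv).1,
      (mem_residualSingular.1 hy).1, true_and, polar_comm Q v y]
  · have hrank := finrank_sup_span_singleton (mem_residualSingular.1 hv).2.2
    rw [hQ.card_singular_perp (m := m) (hsup hv) (by omega), hrank]

open scoped Classical in
lemma sum_perp_eq_neg_pow_mul_sum {f : V → ℤ} (hf : ∀ v, Q v ≠ 0 → f v = 0)
    (hgen : ∀ g, IsGenerator Q n g → ∑ v with v ∈ g, f v = 0)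
    (hW : TotallySingular Q W) (hm : finrank F W + m = n) :
    ∑ v with v ∈ perp Q W, f v = -Fintype.card F ^ (m + 1) * ∑ v with v ∈ W, f v := by
  induction m generalizing W with
  | zero =>
    have hres := hQ.card_residualSingular hW hm
    have hempty : residualSingular Q W = ∅ := by simpa using hres
    rw [sum_eq_sum_add_sum_residualSingular hf hW.le_perp le_rfl, hempty, hgen W ⟨hW, hm⟩]
    simp
  | succ m ih =>
    have hstep : ∑ v ∈ residualSingular Q W, ∑ y with y ∈ perp Q (W ⊔ F ∙ v), f y =
        -Fintype.card F ^ (m + 1) *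
          ∑ v ∈ residualSingular Q W, ∑ y with y ∈ W ⊔ F ∙ v, f y := by
      rw [Finset.mul_sum]
      refine Finset.sum_congr rfl fun v hv => ?_
      obtain ⟨hvW, hv0, hvn⟩ := mem_residualSingular.1 hv
      have hrank := finrank_sup_span_singleton hvn
      exact ih (hW.sup_span_singleton hv0 hvW) (by omega)
    rw [hQ.sum_residualSingular_sum_perp hW hm hf,
      sum_residualSingular_sum_sup_span_singleton hW hf, hQ.card_residualSingular hW hm] at hstep
    rw [sum_eq_sum_add_sum_residualSingular hf hW.le_perp le_rfl,
      residualSingular_filter_mem_perp]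
    have hq : (1 : ℤ) < Fintype.card F := mod_cast Fintype.one_lt_card
    have hM : (1 : ℤ) < Fintype.card F ^ (m + 1) := one_lt_pow₀ hq (by omega)
    have hne : (Fintype.card F : ℤ) ^ finrank F W *
        ((Fintype.card F ^ (m + 1) - 1) * (Fintype.card F ^ (m + 1) + 1)) ≠ 0 := by positivity
    refine mul_left_cancel₀ hne ?_
    linear_combination hstep

end IsElliptic

end SingularCount

section BinaryField

open QuadraticMap Submodule

variable [Fintype F] (hF : Fintype.card F = 2)
include hF

lemma eq_zero_or_eq_one_of_card_eq_two (a : F) : a = 0 ∨ a = 1 := by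
  have ha := FiniteField.pow_card a
  rw [hF] at ha
  exact (IsIdempotentElem.iff_eq_zero_or_one (p := a)).1 ((pow_two a).symm.trans ha)

lemma add_self_eq_zero_of_card_eq_two (v : V) : v + v = 0 := by
  have h2 : (2 : F) = 0 := by simpa [hF] using FiniteField.cast_card_eq_zero F
  rw [← two_smul F v, h2, zero_smul]

lemma mem_span_singleton_of_card_eq_two {x v : V} : v ∈ F ∙ x ↔ v = 0 ∨ v = x := by
  rw [mem_span_singleton]
  constructor
  · rintro ⟨a, rfl⟩
    obtain rfl | rfl := eq_zero_or_eq_one_of_card_eq_two hF a <;> simp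
  · rintro (rfl | rfl)
    exacts [⟨0, zero_smul F x⟩, ⟨1, one_smul F v⟩]

lemma span_singleton_injective_of_card_eq_two : Function.Injective fun v : V => F ∙ v := by
  intro v w (hvw : F ∙ v = F ∙ w)
  have hv := (mem_span_singleton_of_card_eq_two hF).1 (hvw ▸ mem_span_singleton_self v)
  have hw := (mem_span_singleton_of_card_eq_two hF).1 (hvw ▸ mem_span_singleton_self w)
  grind

lemma polar_self_eq_zero_of_card_eq_two (Q : QuadraticForm F V) (v : V) : polar Q v v = 0 := by
  rw [polar_self, two_nsmul, add_self_eq_zero_of_card_eq_two hF]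

open scoped Classical in
lemma charSum_eq_ite_of_card_eq_two (a : F) : charSum a = if a = 0 then 1 else -1 := by
  simp [charSum, hF]

lemma charSum_add_of_card_eq_two (a b : F) : charSum (a + b) = charSum a * charSum b := by
  have h11 : (1 : F) + 1 = 0 := add_self_eq_zero_of_card_eq_two hF 1
  obtain rfl | rfl := eq_zero_or_eq_one_of_card_eq_two hF a <;>
    obtain rfl | rfl := eq_zero_or_eq_one_of_card_eq_two hF b <;>
    simp [charSum_eq_ite_of_card_eq_two hF, h11]

lemma charSum_zero_of_card_eq_two : charSum (0 : F) = 1 := by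
  simp [charSum_eq_ite_of_card_eq_two hF]

open scoped Classical in
lemma two_mul_card_filter_eq_zero {ι : Type*} (T : Finset ι) (a : ι → F) :
    (2 * {w ∈ T | a w = 0}.card : ℤ) = T.card + ∑ w ∈ T, charSum (a w) := by
  rw [Finset.card_eq_sum_ones T, Finset.card_filter]
  push_cast
  rw [Finset.mul_sum, ← Finset.sum_add_distrib]
  refine Finset.sum_congr rfl fun w _ => ?_
  rw [charSum_eq_ite_of_card_eq_two hF]
  split_ifs <;> rfl

open scoped Classical in
lemma four_mul_card_filter_eq_zero_and {ι : Type*} (T : Finset ι) (a b : ι → F) :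
    (4 * {w ∈ T | a w = 0 ∧ b w = 0}.card : ℤ) =
      T.card + ∑ w ∈ T, charSum (a w) + ∑ w ∈ T, charSum (b w) +
        ∑ w ∈ T, charSum (a w) * charSum (b w) := by
  rw [Finset.card_eq_sum_ones T, Finset.card_filter]
  push_cast
  rw [Finset.mul_sum, ← Finset.sum_add_distrib, ← Finset.sum_add_distrib, ← Finset.sum_add_distrib]
  refine Finset.sum_congr rfl fun w _ => ?_
  rw [charSum_eq_ite_of_card_eq_two hF, charSum_eq_ite_of_card_eq_two hF]
  split_ifs <;> simp_all

variable {Q : QuadraticForm F V}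

lemma sum_charSum_mul_charSum_polar [Fintype V] (u : V) :
    ∑ w, charSum (Q w) * charSum (polar Q u w) = charSum (Q u) * ∑ w, charSum (Q w) := by
  rw [← Equiv.sum_comp (Equiv.addLeft u), Finset.mul_sum]
  refine Finset.sum_congr rfl fun w _ => ?_
  rw [← charSum_add_of_card_eq_two hF, ← charSum_add_of_card_eq_two hF, Equiv.coe_addLeft,
    QuadraticMap.map_add Q, polar_add_right, polar_self_eq_zero_of_card_eq_two hF]
  congr 1
  have hp := add_self_eq_zero_of_card_eq_two hF (polar Q u w)
  linear_combination hp

lemma IsElliptic.sum_charSum_of_card_eq_two [Fintype V] {n : ℕ} (hQ : IsElliptic Q n) :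
    ∑ w, charSum (Q w) = -2 ^ (n + 1) := by
  rw [hQ.sum_charSum, hF]
  norm_num

-- A vector `u` of the radical with `Q u ≠ 0` would make the Gauss sum of `Q` vanish.
lemma IsElliptic.eq_zero_of_forall_polar_eq_zero [Finite V] {n : ℕ} (hQ : IsElliptic Q n)
    {u : V} (hu : ∀ w, polar Q u w = 0) : u = 0 := by
  have := Fintype.ofFinite V
  refine hQ.nondeg u ?_ hu
  by_contra hQu
  have hsum := sum_charSum_mul_charSum_polar (Q := Q) hF u
  simp only [hu, charSum_zero_of_card_eq_two hF, mul_one,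
    charSum_of_ne_zero hQu, hQ.sum_charSum_of_card_eq_two hF] at hsum
  have hpow : (0 : ℤ) < 2 ^ (n + 1) := by positivity
  linarith

open scoped Classical in
lemma IsElliptic.sum_charSum_polar [Fintype V] {n : ℕ} (hQ : IsElliptic Q n) (u : V) :
    ∑ w, charSum (polar Q u w) = if u = 0 then 2 ^ (2 * n + 2) else 0 := by
  split_ifs with hu
  · have hcard := Module.card_eq_pow_finrank (K := F) (V := V)
    rw [hF, hQ.finrank_eq] at hcard
    simp [hu, charSum_zero_of_card_eq_two hF, hcard]
  · have hne : Q.polarBilin u ≠ 0 := fun h =>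
      hu (hQ.eq_zero_of_forall_polar_eq_zero hF fun w => LinearMap.congr_fun h w)
    simpa using sum_charSum_add_apply hne 0

end BinaryField

section AffineSingular

open QuadraticMap Submodule

variable {Q : QuadraticForm F V} {z : V}

open scoped Classical in
/-- The singular vectors off the hyperplane `z⊥`. Over the field with two elements they represent
the points of the quadric outside that hyperplane. -/
def affineSingular [Fintype V] (Q : QuadraticForm F V) (z : V) : Finset V :=
  {w | Q w = 0 ∧ polar Q z w ≠ 0}

lemma mem_affineSingular [Fintype V] {w : V} :
    w ∈ affineSingular Q z ↔ Q w = 0 ∧ polar Q z w ≠ 0 := by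
  simp [affineSingular]

lemma ne_zero_of_mem_affineSingular [Fintype V] {w : V} (hw : w ∈ affineSingular Q z) :
    w ≠ 0 := by
  rintro rfl
  simp [mem_affineSingular] at hw

lemma sum_eq_zero_of_forall_add_eq_neg [Fintype V] {h : V → ℤ} (hh : ∀ w, h (w + z) = -h w) :
    ∑ w, h w = 0 := by
  have hneg : ∑ w, h w = -∑ w, h w := calc
    _ = ∑ w, h (w + z) := (Equiv.sum_comp (Equiv.addRight z) h).symm
    _ = -∑ w, h w := by simp [hh]
  linarith

variable [Fintype F] (hF : Fintype.card F = 2)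
include hF

lemma add_mem_affineSingular_iff [Fintype V] (hz : Q z ≠ 0) {w : V} :
    w + z ∈ affineSingular Q z ↔ w ∈ affineSingular Q z := by
  have h11 : (1 : F) + 1 = 0 := add_self_eq_zero_of_card_eq_two hF 1
  have hz1 : Q z = 1 := (eq_zero_or_eq_one_of_card_eq_two hF _).resolve_left hz
  have hpolar : polar Q z (w + z) = polar Q z w := by
    rw [polar_add_right, polar_self_eq_zero_of_card_eq_two hF, add_zero]
  simp only [mem_affineSingular, hpolar, and_congr_left_iff]
  intro hw
  have hw1 := (eq_zero_or_eq_one_of_card_eq_two hF _).resolve_left hw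
  rw [QuadraticMap.map_add Q, polar_comm, hw1, hz1, add_assoc, h11, add_zero]

open scoped Classical in
-- The indicator of `affineSingular Q z` is `(1 + χ (Q w)) (1 - χ (B(z, w))) / 4`.
lemma four_mul_sum_affineSingular_charSum_polar [Fintype V] (u : V) :
    4 * ∑ w ∈ affineSingular Q z, charSum (polar Q u w) =
      ∑ w, charSum (polar Q u w) - ∑ w, charSum (polar Q (u + z) w) +
        (charSum (Q u) - charSum (Q (u + z))) * ∑ w, charSum (Q w) := by
  rw [sub_mul, ← sum_charSum_mul_charSum_polar hF, ← sum_charSum_mul_charSum_polar hF,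
    ← Finset.sum_sub_distrib, ← Finset.sum_sub_distrib, ← Finset.sum_add_distrib,
    affineSingular, Finset.sum_filter, Finset.mul_sum]
  refine Finset.sum_congr rfl fun w _ => ?_
  rw [polar_add_left, charSum_add_of_card_eq_two hF, charSum_eq_ite_of_card_eq_two hF (Q w),
    charSum_eq_ite_of_card_eq_two hF (polar Q z w)]
  split_ifs <;> grind

open scoped Classical in
lemma IsElliptic.sum_affineSingular_charSum_polar [Fintype V] {n : ℕ} (hQ : IsElliptic Q n)
    (hz : Q z ≠ 0) {u : V} (hu : polar Q u z = 0) :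
    ∑ w ∈ affineSingular Q z, charSum (polar Q u w) =
      (if u = 0 then 2 ^ (2 * n) else 0) - (if u = z then 2 ^ (2 * n) else 0) -
        2 ^ n * charSum (Q u) := by
  have hsum := four_mul_sum_affineSingular_charSum_polar (Q := Q) (z := z) hF u
  have huz : u + z = 0 ↔ u = z := by
    rw [add_eq_zero_iff_eq_neg, neg_eq_of_add_eq_zero_left (add_self_eq_zero_of_card_eq_two hF z)]
  have hsign : charSum (Q (u + z)) = -charSum (Q u) := by
    rw [QuadraticMap.map_add Q, hu, add_zero, charSum_add_of_card_eq_two hF,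
      charSum_of_ne_zero hz, mul_neg_one]
  rw [hQ.sum_charSum_polar hF, hQ.sum_charSum_polar hF, hQ.sum_charSum_of_card_eq_two hF, hsign,
    huz] at hsum
  refine mul_left_cancel₀ four_ne_zero ?_
  split_ifs at hsum ⊢ <;> linear_combination hsum

lemma IsElliptic.card_affineSingular [Fintype V] {n : ℕ} (hQ : IsElliptic Q n) (hz : Q z ≠ 0) :
    ((affineSingular Q z).card : ℤ) = 2 ^ (2 * n) - 2 ^ n := by
  have hz0 : 0 ≠ z := by
    rintro rfl
    simp at hz
  simpa [charSum_zero_of_card_eq_two hF, hz0] using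
    hQ.sum_affineSingular_charSum_polar hF hz (polar_zero_left (Q := Q) z)

lemma sum_affineSingular_eq_zero_of_forall_add_eq_neg [Fintype V] (hz : Q z ≠ 0) {h : V → ℤ}
    (hh : ∀ w, h (w + z) = -h w) : ∑ w ∈ affineSingular Q z, h w = 0 := by
  classical
  have hodd := sum_eq_zero_of_forall_add_eq_neg (z := z)
    (h := fun w => if w ∈ affineSingular Q z then h w else 0) fun w => by
      simp only [add_mem_affineSingular_iff hF hz, hh]
      split_ifs <;> simp
  simpa using hodd

end AffineSingular

open scoped Classical in
/-- A set `T` of singular vectors off `z⊥` which meets every generator in exactly half of the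
vectors that the generator has off `z⊥`. Over the field with two elements this is the vector form
of a relative hemisystem with respect to the hyperplane `z⊥`. -/
structure IsVectorHemisystem [Fintype V] (Q : QuadraticForm F V) (n : ℕ) (z : V) (T : Finset V) :
    Prop where
  subset : T ⊆ affineSingular Q z
  two_mul_card : ∀ g : Submodule F V, IsGenerator Q n g → 2 * {v ∈ T | v ∈ g}.card =
    {v ∈ affineSingular Q z | v ∈ g}.card

section Signing

open QuadraticMap Submodule

variable [Fintype V] {Q : QuadraticForm F V} {z : V} {T : Finset V}

open scoped Classical in
/-- The difference of the indicator functions of `T` and of its complement in the set of singular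
vectors off `z⊥`. -/
def signing (Q : QuadraticForm F V) (z : V) (T : Finset V) (v : V) : ℤ :=
  2 * (if v ∈ T then 1 else 0) - if v ∈ affineSingular Q z then 1 else 0

lemma sum_affineSingular_add_sum_signing_mul (h : V → ℤ) :
    ∑ w ∈ affineSingular Q z, h w + ∑ w, signing Q z T w * h w = 2 * ∑ w ∈ T, h w := by
  simp [signing, sub_mul, Finset.sum_sub_distrib, ← Finset.mul_sum]

namespace IsVectorHemisystem

variable {n : ℕ} (hT : IsVectorHemisystem Q n z T)
include hT

lemma signing_eq_zero {v : V} (hv : v ∉ affineSingular Q z) : signing Q z T v = 0 := by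
  have hvT : v ∉ T := fun h => hv (hT.subset h)
  simp [signing, hv, hvT]

lemma signing_zero : signing Q z T 0 = 0 :=
  hT.signing_eq_zero fun h => ne_zero_of_mem_affineSingular h rfl

lemma signing_eq_one {v : V} (hv : v ∈ T) : signing Q z T v = 1 := by
  simp [signing, hv, hT.subset hv]

open scoped Classical in
lemma sum_signing_generator {g : Submodule F V} (hg : IsGenerator Q n g) :
    ∑ v with v ∈ g, signing Q z T v = 0 := by
  have hsum := sum_affineSingular_add_sum_signing_mul (Q := Q) (z := z) (T := T)
    fun v => if v ∈ g then 1 else 0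
  have hcard : (2 * {v ∈ T | v ∈ g}.card : ℤ) = {v ∈ affineSingular Q z | v ∈ g}.card :=
    mod_cast hT.two_mul_card g hg
  simp only [Finset.sum_boole, mul_ite, mul_one, mul_zero] at hsum
  rw [Finset.sum_filter]
  linarith

open scoped Classical in
lemma sum_signing_perp [Fintype F] (hQ : IsElliptic Q n) {m : ℕ} {W : Submodule F V}
    (hW : TotallySingular Q W) (hm : finrank F W + m = n) :
    ∑ v with v ∈ perp Q W, signing Q z T v =
      -Fintype.card F ^ (m + 1) * ∑ v with v ∈ W, signing Q z T v :=
  hQ.sum_perp_eq_neg_pow_mul_sum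
    (fun _ hv => hT.signing_eq_zero fun h => hv (mem_affineSingular.1 h).1)
    (fun _ hg => hT.sum_signing_generator hg) hW hm

lemma sum_signing [Finite F] (hQ : IsElliptic Q n) : ∑ v, signing Q z T v = 0 := by
  classical
  have := Fintype.ofFinite F
  have hsum := hT.sum_signing_perp hQ (m := n) (W := ⊥) totallySingular_bot (by simp)
  have hperp (v : V) : v ∈ perp Q (⊥ : Submodule F V) := mem_perp.2 (by simp)
  simpa [hperp, Finset.sum_filter, hT.signing_zero] using hsum

variable [Fintype F] (hQ : IsElliptic Q n) (hF : Fintype.card F = 2)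
include hQ hF

lemma sum_signing_mul_charSum_polar {x : V} (hx : Q x = 0) (hx0 : x ≠ 0) :
    ∑ w, signing Q z T w * charSum (polar Q x w) = -2 ^ (n + 1) * signing Q z T x := by
  classical
  have hx1 : finrank F (F ∙ x) = 1 := finrank_span_singleton hx0
  have hn : 1 ≤ n := hx1 ▸ hQ.hasWittIndex.1 _ (totallySingular_span_singleton hx)
  have hperp := hT.sum_signing_perp hQ (m := n - 1) (totallySingular_span_singleton hx) (by omega)
  have hspan : ∑ v with v ∈ F ∙ x, signing Q z T v = signing Q z T x := by
    have hpair : ({v | v ∈ F ∙ x} : Finset V) = {0, x} := by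
      ext v
      simp [mem_span_singleton_of_card_eq_two hF]
    rw [hpair, Finset.sum_pair hx0.symm, hT.signing_zero, zero_add]
  have hchar (w : V) : signing Q z T w * charSum (polar Q x w) =
      2 * (if w ∈ perp Q (F ∙ x) then signing Q z T w else 0) - signing Q z T w := by
    rw [charSum_eq_ite_of_card_eq_two hF]
    simp only [mem_perp_span_singleton]
    split_ifs <;> ring
  simp only [hchar, Finset.sum_sub_distrib, ← Finset.mul_sum, ← Finset.sum_filter, hperp, hspan,
    hT.sum_signing hQ, hF, Nat.sub_add_cancel hn]
  push_cast
  ring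

variable (hz : Q z ≠ 0)
include hz

-- On the support of the signing, `w ↦ χ (B(x + z, w))` is the negative of `w ↦ χ (B(x, w))`.
lemma signing_add (x : V) : signing Q z T (x + z) = -signing Q z T x := by
  by_cases hx : x ∈ affineSingular Q z
  · have hxz := (add_mem_affineSingular_iff hF hz).2 hx
    have hterm (w : V) : signing Q z T w * charSum (polar Q (x + z) w) =
        -(signing Q z T w * charSum (polar Q x w)) := by
      by_cases hw : w ∈ affineSingular Q z
      · rw [polar_add_left, charSum_add_of_card_eq_two hF,
          charSum_of_ne_zero (mem_affineSingular.1 hw).2]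
        ring
      · simp [hT.signing_eq_zero hw]
    have hsum := hT.sum_signing_mul_charSum_polar hQ hF (mem_affineSingular.1 hxz).1
      (ne_zero_of_mem_affineSingular hxz)
    simp only [hterm, Finset.sum_neg_distrib,
      hT.sum_signing_mul_charSum_polar hQ hF (mem_affineSingular.1 hx).1
        (ne_zero_of_mem_affineSingular hx)] at hsum
    have hpow : (-2 ^ (n + 1) : ℤ) ≠ 0 := by simp
    refine mul_left_cancel₀ hpow ?_
    linear_combination -hsum
  · rw [hT.signing_eq_zero hx, hT.signing_eq_zero (mt (add_mem_affineSingular_iff hF hz).1 hx),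
      neg_zero]

lemma two_mul_card_eq : (2 * T.card : ℤ) = 2 ^ (2 * n) - 2 ^ n := by
  have hsum := sum_affineSingular_add_sum_signing_mul (Q := Q) (z := z) (T := T) 1
  simpa [hT.sum_signing hQ, hQ.card_affineSingular hF hz] using hsum.symm

lemma sum_charSum_polar {x : V} (hx : x ∈ T) : ∑ w ∈ T, charSum (polar Q x w) = -2 ^ n := by
  obtain ⟨hQx, hxz⟩ := mem_affineSingular.1 (hT.subset hx)
  have haff : ∑ w ∈ affineSingular Q z, charSum (polar Q x w) = 0 := by
    refine sum_affineSingular_eq_zero_of_forall_add_eq_neg hF hz fun w => ?_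
    rw [polar_comm] at hxz
    rw [polar_add_right, charSum_add_of_card_eq_two hF,
      charSum_of_ne_zero hxz, mul_neg_one]
  have hsum := sum_affineSingular_add_sum_signing_mul (Q := Q) (z := z) (T := T)
    fun w => charSum (polar Q x w)
  rw [haff, hT.sum_signing_mul_charSum_polar hQ hF hQx
    (ne_zero_of_mem_affineSingular (hT.subset hx)), hT.signing_eq_one hx] at hsum
  refine mul_left_cancel₀ two_ne_zero ?_
  linear_combination -hsum

lemma two_mul_sum_charSum_polar_mul {x y : V} (hx : x ∈ T) (hy : y ∈ T) (hxy : x ≠ y) :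
    2 * ∑ w ∈ T, charSum (polar Q x w) * charSum (polar Q y w) =
      -(2 ^ n * charSum (polar Q x y)) := by
  obtain ⟨hQx, hxz⟩ := mem_affineSingular.1 (hT.subset hx)
  obtain ⟨hQy, hyz⟩ := mem_affineSingular.1 (hT.subset hy)
  have hperp : polar Q (x + y) z = 0 := by
    rw [polar_comm, polar_add_right, (eq_zero_or_eq_one_of_card_eq_two hF _).resolve_left hxz,
      (eq_zero_or_eq_one_of_card_eq_two hF _).resolve_left hyz,
      add_self_eq_zero_of_card_eq_two hF]
  have hy_eq : x + (x + y) = y := by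
    rw [← add_assoc, add_self_eq_zero_of_card_eq_two hF, zero_add]
  have hne0 : x + y ≠ 0 := fun h => hxy (by rw [← hy_eq, h, add_zero])
  have hnez : x + y ≠ z := fun h => by
    have hneg := hT.signing_add hQ hF hz x
    rw [← hy_eq, h] at hy
    rw [hT.signing_eq_one hx, hT.signing_eq_one hy] at hneg
    norm_num at hneg
  have hodd : ∑ w, signing Q z T w * charSum (polar Q (x + y) w) = 0 := by
    refine sum_eq_zero_of_forall_add_eq_neg (z := z) fun w => ?_
    rw [hT.signing_add hQ hF hz, polar_add_right, hperp, add_zero, neg_mul]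
  have hsum := sum_affineSingular_add_sum_signing_mul (Q := Q) (z := z) (T := T)
    fun w => charSum (polar Q (x + y) w)
  rw [hodd, hQ.sum_affineSingular_charSum_polar hF hz hperp, if_neg hne0, if_neg hnez,
    QuadraticMap.map_add Q, hQx, hQy] at hsum
  simp only [← charSum_add_of_card_eq_two hF, ← polar_add_left]
  simpa using hsum.symm

end IsVectorHemisystem

end Signing

section Neighbors

open QuadraticMap Submodule

variable {Q : QuadraticForm F V} {T : Finset V}

open scoped Classical in
/-- The vectors of `T` other than `x` that are orthogonal to `x`. When `T` consists of singular
vectors, these are the neighbours of `x` in the collinearity graph on `T`. -/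
def neighbors (Q : QuadraticForm F V) (T : Finset V) (x : V) : Finset V :=
  {w ∈ T | x ≠ w ∧ polar Q x w = 0}

lemma mem_neighbors {x w : V} : w ∈ neighbors Q T x ↔ w ∈ T ∧ x ≠ w ∧ polar Q x w = 0 := by
  simp [neighbors]

namespace IsVectorHemisystem

variable [Fintype F] [Fintype V] {n : ℕ} {z : V} (hT : IsVectorHemisystem Q n z T)
  (hQ : IsElliptic Q n) (hF : Fintype.card F = 2) (hz : Q z ≠ 0)
include hT hQ hF hz

lemma four_mul_card_neighbors {x : V} (hx : x ∈ T) :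
    (4 * (neighbors Q T x).card : ℤ) = 2 ^ (2 * n) - 3 * 2 ^ n - 4 := by
  classical
  have hinsert : {w ∈ T | polar Q x w = 0} = insert x (neighbors Q T x) := by
    ext w
    have := polar_self_eq_zero_of_card_eq_two hF Q x
    simp only [Finset.mem_filter, Finset.mem_insert, mem_neighbors]
    grind
  have hcount := two_mul_card_filter_eq_zero hF T fun w => polar Q x w
  rw [hinsert, Finset.card_insert_of_notMem (by simp [mem_neighbors]),
    hT.sum_charSum_polar hQ hF hz hx] at hcount
  have hcard := hT.two_mul_card_eq hQ hF hz
  push_cast at hcount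
  linarith

open scoped Classical in
lemma eight_mul_card_filter_polar_eq_zero {x y : V} (hx : x ∈ T) (hy : y ∈ T) (hxy : x ≠ y) :
    (8 * {w ∈ T | polar Q x w = 0 ∧ polar Q y w = 0}.card : ℤ) =
      2 ^ (2 * n) - 5 * 2 ^ n - 2 ^ n * charSum (polar Q x y) := by
  have hcount := four_mul_card_filter_eq_zero_and hF T (fun w => polar Q x w) fun w => polar Q y w
  rw [hT.sum_charSum_polar hQ hF hz hx, hT.sum_charSum_polar hQ hF hz hy] at hcount
  have hcard := hT.two_mul_card_eq hQ hF hz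
  have hmul := hT.two_mul_sum_charSum_polar_mul hQ hF hz hx hy hxy
  linarith

open scoped Classical in
lemma eight_mul_card_inter_neighbors_of_polar_eq_zero {x y : V} (hx : x ∈ T) (hy : y ∈ T)
    (hxy : x ≠ y) (hpolar : polar Q x y = 0) :
    (8 * (neighbors Q T x ∩ neighbors Q T y).card : ℤ) = 2 ^ (2 * n) - 6 * 2 ^ n - 16 := by
  have hinsert : {w ∈ T | polar Q x w = 0 ∧ polar Q y w = 0} =
      insert x (insert y (neighbors Q T x ∩ neighbors Q T y)) := by
    ext w
    have hxx := polar_self_eq_zero_of_card_eq_two hF Q x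
    have hyy := polar_self_eq_zero_of_card_eq_two hF Q y
    have hyx := polar_comm Q x y
    simp only [Finset.mem_filter, Finset.mem_insert, Finset.mem_inter, mem_neighbors]
    grind
  have hcount := hT.eight_mul_card_filter_polar_eq_zero hQ hF hz hx hy hxy
  rw [hinsert, Finset.card_insert_of_notMem (by simp [mem_neighbors, hxy]),
    Finset.card_insert_of_notMem (by simp [mem_neighbors]), hpolar,
    charSum_zero_of_card_eq_two hF] at hcount
  push_cast at hcount
  linarith

open scoped Classical in
lemma eight_mul_card_inter_neighbors_of_polar_ne_zero {x y : V} (hx : x ∈ T) (hy : y ∈ T)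
    (hxy : x ≠ y) (hpolar : polar Q x y ≠ 0) :
    (8 * (neighbors Q T x ∩ neighbors Q T y).card : ℤ) = 2 ^ (2 * n) - 4 * 2 ^ n := by
  have hinter : {w ∈ T | polar Q x w = 0 ∧ polar Q y w = 0} =
      neighbors Q T x ∩ neighbors Q T y := by
    ext w
    have hyx := polar_comm Q x y
    simp only [Finset.mem_filter, Finset.mem_inter, mem_neighbors]
    grind
  have hcount := hT.eight_mul_card_filter_polar_eq_zero hQ hF hz hx hy hxy
  rw [hinter, charSum_of_ne_zero hpolar] at hcount
  linarith

lemma card_eq (hn : 1 ≤ n) : T.card = 2 ^ (n - 1) * (2 ^ n - 1) := by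
  have hcard := hT.two_mul_card_eq hQ hF hz
  obtain ⟨m, rfl⟩ := Nat.exists_eq_add_of_le' hn
  zify [Nat.one_le_two_pow]
  refine mul_left_cancel₀ two_ne_zero ?_
  rw [hcard, Nat.add_sub_cancel]
  ring

lemma card_neighbors (hn : 2 ≤ n) {x : V} (hx : x ∈ T) :
    (neighbors Q T x).card = (2 ^ (n - 2) - 1) * (2 ^ n + 1) := by
  have hcard := hT.four_mul_card_neighbors hQ hF hz hx
  obtain ⟨m, rfl⟩ := Nat.exists_eq_add_of_le' hn
  zify [Nat.one_le_two_pow]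
  refine mul_left_cancel₀ four_ne_zero ?_
  rw [hcard, Nat.add_sub_cancel]
  ring

open scoped Classical in
lemma card_inter_neighbors_of_polar_eq_zero (hn : 3 ≤ n) {x y : V} (hx : x ∈ T) (hy : y ∈ T)
    (hxy : x ≠ y) (hpolar : polar Q x y = 0) :
    (neighbors Q T x ∩ neighbors Q T y).card = 2 * (2 ^ (n - 1) + 1) * (2 ^ (n - 3) - 1) := by
  have hcard := hT.eight_mul_card_inter_neighbors_of_polar_eq_zero hQ hF hz hx hy hxy hpolar
  obtain ⟨m, rfl⟩ := Nat.exists_eq_add_of_le' hn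
  zify [Nat.one_le_two_pow]
  refine mul_left_cancel₀ (show (8 : ℤ) ≠ 0 by norm_num) ?_
  rw [hcard, Nat.add_sub_cancel, show m + 3 - 1 = m + 2 from rfl]
  ring

open scoped Classical in
lemma card_inter_neighbors_of_polar_ne_zero (hn : 2 ≤ n) {x y : V} (hx : x ∈ T) (hy : y ∈ T)
    (hxy : x ≠ y) (hpolar : polar Q x y ≠ 0) :
    (neighbors Q T x ∩ neighbors Q T y).card = 2 ^ (n - 1) * (2 ^ (n - 2) - 1) := by
  have hcard := hT.eight_mul_card_inter_neighbors_of_polar_ne_zero hQ hF hz hx hy hxy hpolar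
  obtain ⟨m, rfl⟩ := Nat.exists_eq_add_of_le' hn
  zify [Nat.one_le_two_pow]
  refine mul_left_cancel₀ (show (8 : ℤ) ≠ 0 by norm_num) ?_
  rw [hcard, Nat.add_sub_cancel, show m + 2 - 1 = m + 1 from rfl]
  ring

end IsVectorHemisystem

end Neighbors

section PointVectors

open QuadraticMap Submodule

lemma IsSingularPoint.totallySingular {Q : QuadraticForm F V} {P : Submodule F V}
    (hP : IsSingularPoint Q P) : TotallySingular Q P := by
  obtain ⟨v, -, hv, rfl⟩ := hP
  exact totallySingular_span_singleton hv

lemma adjOn_span_singleton_iff {Q : QuadraticForm F V} {x y : V} (hx : Q x = 0) (hy : Q y = 0) :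
    AdjOn Q (F ∙ x) (F ∙ y) ↔ F ∙ x ≠ F ∙ y ∧ polar Q x y = 0 := by
  refine and_congr_right fun _ => ⟨fun h => ?_, fun h => ?_⟩
  · exact h.le_perp (mem_sup_right (mem_span_singleton_self y)) x
      (mem_sup_left (mem_span_singleton_self x))
  · exact (totallySingular_span_singleton hx).sup_span_singleton hy (mem_perp_span_singleton.2 h)

variable [Fintype V]

open scoped Classical in
/-- The vectors spanning a member of `R`. Over the field with two elements each point of `R` is
spanned by a unique vector. -/
def pointVectors (R : Set (Submodule F V)) : Finset V :=
  {v | F ∙ v ∈ R}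

lemma mem_pointVectors {R : Set (Submodule F V)} {v : V} : v ∈ pointVectors R ↔ F ∙ v ∈ R := by
  simp [pointVectors]

variable [Fintype F] (hF : Fintype.card F = 2) {Q : QuadraticForm F V} {R : Set (Submodule F V)}
include hF

lemma card_pointVectors (hR : ∀ P ∈ R, IsSingularPoint Q P) :
    (pointVectors R).card = R.ncard := by
  have hrange : R ⊆ Set.range fun v : V => F ∙ v := fun P hP =>
    let ⟨v, _, _, hv⟩ := hR P hP
    ⟨v, hv.symm⟩
  rw [← Set.ncard_preimage_of_injective_subset_range
    (span_singleton_injective_of_card_eq_two hF) hrange, ← Set.ncard_coe_finset]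
  congr 1
  ext v
  simp [mem_pointVectors]

lemma mem_neighbors_pointVectors_iff (hR : ∀ P ∈ R, IsSingularPoint Q P) {x v : V}
    (hx : Q x = 0) :
    v ∈ neighbors Q (pointVectors R) x ↔ F ∙ v ∈ R ∧ AdjOn Q (F ∙ x) (F ∙ v) := by
  rw [mem_neighbors, mem_pointVectors]
  refine and_congr_right fun hv => ?_
  have hQv := (hR _ hv).totallySingular v (mem_span_singleton_self v)
  rw [adjOn_span_singleton_iff hx hQv, (span_singleton_injective_of_card_eq_two hF).ne_iff]

lemma ncard_adjOn_eq_card_neighbors (hR : ∀ P ∈ R, IsSingularPoint Q P) {x : V} (hx : Q x = 0) :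
    {P ∈ R | AdjOn Q (F ∙ x) P}.ncard = (neighbors Q (pointVectors R) x).card := by
  rw [← card_pointVectors hF fun P hP => hR P hP.1]
  congr 1
  ext v
  rw [mem_pointVectors, mem_neighbors_pointVectors_iff hF hR hx]
  rfl

open scoped Classical in
lemma ncard_adjOn_adjOn_eq_card_inter_neighbors (hR : ∀ P ∈ R, IsSingularPoint Q P) {x y : V}
    (hx : Q x = 0) (hy : Q y = 0) :
    {P ∈ R | AdjOn Q (F ∙ x) P ∧ AdjOn Q (F ∙ y) P}.ncard =
      (neighbors Q (pointVectors R) x ∩ neighbors Q (pointVectors R) y).card := by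
  rw [← card_pointVectors hF fun P hP => hR P hP.1]
  congr 1
  ext v
  rw [mem_pointVectors, Finset.mem_inter, mem_neighbors_pointVectors_iff hF hR hx,
    mem_neighbors_pointVectors_iff hF hR hy, ← and_and_left]
  rfl

open scoped Classical in
lemma two_mul_card_affineSingular_filter_mem {g : Submodule F V} (hg : TotallySingular Q g)
    {z : V} (hgz : ∃ v ∈ g, polar Q z v ≠ 0) :
    2 * {v ∈ affineSingular Q z | v ∈ g}.card = 2 ^ finrank F g := by
  have hℓ : (Q.polarBilin z).domRestrict g ≠ 0 := fun h => by
    obtain ⟨v, hv, hzv⟩ := hgz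
    exact hzv (LinearMap.congr_fun h ⟨v, hv⟩)
  have hsum : ∑ v with v ∈ g, charSum (polar Q z v) = 0 := by
    rw [Finset.sum_subtype (p := (· ∈ g)) _ (by simp)]
    simpa using sum_charSum_add_apply hℓ 0
  have hfilter : {v ∈ affineSingular Q z | v ∈ g} =
      {v ∈ ({v | v ∈ g} : Finset V) | ¬ polar Q z v = 0} := by
    ext v
    have := hg v
    simp only [Finset.mem_filter, mem_affineSingular, Finset.mem_univ, true_and]
    tauto
  have hzero := two_mul_card_filter_eq_zero hF {v | v ∈ g} fun v => polar Q z v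
  have hadd := Finset.card_filter_add_card_filter_not (s := {v | v ∈ g}) (polar Q z · = 0)
  rw [card_filter_mem, hF] at hadd
  rw [hsum, card_filter_mem, hF] at hzero
  rw [hfilter]
  push_cast at hzero
  zify at hadd ⊢
  linarith

open scoped Classical in
lemma card_pointVectors_filter_mem (hR : ∀ P ∈ R, IsSingularPoint Q P) (g : Submodule F V) :
    {v ∈ pointVectors R | v ∈ g}.card = {P ∈ R | P ≤ g}.ncard := by
  rw [← card_pointVectors hF fun P hP => hR P hP.1]
  congr 1
  ext v
  simp [mem_pointVectors]

lemma IsRelativeMOvoid.isVectorHemisystem {n : ℕ} (hn : 2 ≤ n) {H : Submodule F V}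
    (hR : IsRelativeMOvoid Q n H (2 ^ (n - 2)) R) {z : V} (hH : ∀ v, v ∈ H ↔ polar Q z v = 0) :
    IsVectorHemisystem Q n z (pointVectors R) := by
  classical
  have hsubset : pointVectors R ⊆ affineSingular Q z := fun v hv => by
    obtain ⟨hpoint, hPH⟩ := hR.1 _ (mem_pointVectors.1 hv)
    rw [span_singleton_le_iff_mem, hH] at hPH
    exact mem_affineSingular.2 ⟨hpoint.totallySingular v (mem_span_singleton_self v), hPH⟩
  refine ⟨hsubset, fun g hg => ?_⟩
  by_cases hgH : g ≤ H
  · have hempty : {v ∈ affineSingular Q z | v ∈ g} = ∅ := Finset.filter_false_of_mem fun v hv hvg =>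
      (mem_affineSingular.1 hv).2 ((hH v).1 (hgH hvg))
    have hsub := Finset.filter_subset_filter (· ∈ g) hsubset
    rw [hempty, Finset.subset_empty] at hsub
    simp [hempty, hsub]
  · have hgz : ∃ v ∈ g, polar Q z v ≠ 0 := by
      obtain ⟨v, hvg, hvH⟩ := SetLike.not_le_iff_exists.1 hgH
      exact ⟨v, hvg, mt (hH v).2 hvH⟩
    have hcard := two_mul_card_affineSingular_filter_mem hF hg.1 hgz
    rw [card_pointVectors_filter_mem hF fun P hP => (hR.1 P hP).1, hR.2 g hg hgH]
    obtain ⟨m, rfl⟩ := Nat.exists_eq_add_of_le' hn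
    rw [hg.2] at hcard
    rw [Nat.add_sub_cancel]
    lia

end PointVectors

/-- The collinearity graph `𝒢` on a relative hemisystem `R` of `Q⁻(2n+1,2)`, `n ≥ 3`,
is strongly regular with parameters `v = 2^{n−1}(2ⁿ − 1)`, `k = (2^{n−2} − 1)(2ⁿ + 1)`,
`λ = 2(2^{n−1} + 1)(2^{n−3} − 1)` and `μ = 2^{n−1}(2^{n−2} − 1)`: it has `v` vertices,
every vertex has exactly `k` neighbours, adjacent vertices have exactly `λ` common
neighbours and non-adjacent vertices have exactly `μ` common neighbours. -/
theorem statement_16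
    (n : ℕ) [Fintype F] (hF : Fintype.card F = 2) (hn : 3 ≤ n)
    (hV : finrank F V = 2 * n + 2)
    (Q : QuadraticForm F V) (hQnd : Nondeg Q) (hQw : HasWittIndex Q n)
    (H : Submodule F V) (hH : finrank F H = 2 * n + 1) (hHnd : NondegOn Q H)
    (R : Set (Submodule F V)) (hRovoid : IsRelativeMOvoid Q n H (2 ^ (n - 2)) R)
    (hRhemi : R.ncard
      = {P : Submodule F V | IsSingularPoint Q P ∧ ¬ P ≤ H ∧ P ∉ R}.ncard) :
    -- number of vertices
    R.ncard = 2 ^ (n - 1) * (2 ^ n - 1) ∧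
    -- regularity of degree k
    (∀ P ∈ R, {P' ∈ R | AdjOn Q P P'}.ncard = (2 ^ (n - 2) - 1) * (2 ^ n + 1)) ∧
    -- adjacent vertices have λ common neighbours
    (∀ P ∈ R, ∀ P'' ∈ R, AdjOn Q P P'' →
      {P' ∈ R | AdjOn Q P P' ∧ AdjOn Q P'' P'}.ncard
        = 2 * (2 ^ (n - 1) + 1) * (2 ^ (n - 3) - 1)) ∧
    -- distinct non-adjacent vertices have μ common neighbours
    (∀ P ∈ R, ∀ P'' ∈ R, P ≠ P'' → ¬ AdjOn Q P P'' →
      {P' ∈ R | AdjOn Q P P' ∧ AdjOn Q P'' P'}.ncard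
        = 2 ^ (n - 1) * (2 ^ (n - 2) - 1)) := by
  have : FiniteDimensional F V := .of_finrank_pos (by omega)
  have := Module.finite_of_finite F (M := V)
  have := Fintype.ofFinite V
  classical
  have hQ : IsElliptic Q n := ⟨hV, hQnd, hQw⟩
  obtain ⟨z, hz, hzH⟩ := exists_forall_mem_iff_polar_eq_zero
    (fun v => hQ.eq_zero_of_forall_polar_eq_zero hF) (by omega) hHnd
  have hT := hRovoid.isVectorHemisystem hF (by omega) hzH
  have hpoint (P) (hP : P ∈ R) : IsSingularPoint Q P := (hRovoid.1 P hP).1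
  refine ⟨?_, fun P hP => ?_, fun P hP P'' hP'' hadj => ?_, fun P hP P'' hP'' hne hadj => ?_⟩
  · rw [← card_pointVectors hF hpoint, hT.card_eq hQ hF hz (by omega)]
  all_goals obtain ⟨x, -, hx, rfl⟩ := hpoint P hP
  · rw [ncard_adjOn_eq_card_neighbors hF hpoint hx,
      hT.card_neighbors hQ hF hz (by omega) (mem_pointVectors.2 hP)]
  all_goals
    obtain ⟨y, -, hy, rfl⟩ := hpoint P'' hP''
    rw [ncard_adjOn_adjOn_eq_card_inter_neighbors hF hpoint hx hy]
    rw [adjOn_span_singleton_iff hx hy] at hadj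
  · exact hT.card_inter_neighbors_of_polar_eq_zero hQ hF hz hn (mem_pointVectors.2 hP)
      (mem_pointVectors.2 hP'') (fun h => hadj.1 (by rw [h])) hadj.2
  · exact hT.card_inter_neighbors_of_polar_ne_zero hQ hF hz (by omega) (mem_pointVectors.2 hP)
      (mem_pointVectors.2 hP'') (fun h => hne (by rw [h])) fun h => hadj ⟨hne, h⟩
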